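/- lim_{k→∞} inf_{R∈𝓡(k)} (1/k) · log Pr_{R,Q}(S^{αk, k}) = 0. -/

import Mathlib

/-!
The minimality of `q` plays no part: only the constraint `∑ q_i b_i ≤ α ∑ q_i k_i` matters.
It says that, under any rules mapping, `S = μ - α κ` is a supermartingale. A consistent mapping
makes the coverage hit `k` exactly, so the event `S^{αk,k}` is that `S ≤ 0` when this happens.

Given `ρ < 1`, each `q j` is at least `ρ` times a probability vector for which `S` either does not
move or has strictly negative drift (`RB.exists_tilt`). For these tilted vectors, with a small
`θ > 0` and `c > 0`, the function `f` given by `1 - exp (θ s)` for `s < 0`, `c` at `s = 0` and `0`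
for `s > 0` is subharmonic, hence `ρ f(s) ≤ ∑ q_i f(s + x_i)` with `x_i = b_i - α k_i`
(`RB.exists_potential`). As `f` vanishes on the losing states, backward induction along words of
cost at most `α k` gives `Pr ≥ ρ ^ (⌊αk⌋ + 1) * f 0` uniformly in the mapping (`RB.lower_bound`),
so that `(1/k) log Pr ≥ α log ρ + o(1)`. Letting `ρ → 1` gives the lower bound; the upper bound is
`Pr ≤ 1`, which holds because `A^{b,k}` is prefix-free (`RB.tailSum_le`).
-/

open scoped Classical

noncomputable section

namespace RB

/-- The alphabet `𝒳`, given as the disjoint union of the groups `𝒳_j`. -/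
abbrev X (N : ℕ) (r : Fin N → ℕ) : Type := (j : Fin N) × Fin (r j)

variable {N : ℕ} {r : Fin N → ℕ}

/-- the coverage `κ` of a word (`K` is the concatenation of the `k̄ʲ`) -/
def kap (K : (j : Fin N) → Fin (r j) → ℕ) (l : List (X N r)) : ℕ :=
  (l.map fun a => K a.1 a.2).sum

/-- the cost `μ` of a word (`B` is the concatenation of the `b̄ʲ`) -/
def mu (B : (j : Fin N) → Fin (r j) → ℕ) (l : List (X N r)) : ℕ :=
  (l.map fun a => B a.1 a.2).sum

/-- `P_{R,Υ}(ā) = ∏_ℓ [Υ_{a_ℓ}` if `a_ℓ ∈ 𝒳_{R(a_1,…,a_{ℓ-1})}`, else `0]` -/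
def wordP (R : List (X N r) → Fin N) (Υ : (j : Fin N) → Fin (r j) → ℝ)
    (l : List (X N r)) : ℝ :=
  ∏ ℓ : Fin l.length,
    if (l.get ℓ).1 = R (l.take ℓ.1) then Υ (l.get ℓ).1 (l.get ℓ).2 else 0

/-- the set of words `A^{b,k}` -/
def ASet (B K : (j : Fin N) → Fin (r j) → ℕ) (bb kb : ℝ) : Set (List (X N r)) :=
  if bb < 0 then ∅
  else if kb ≤ 0 then {[]}
  else {l | l ≠ [] ∧ (mu B l : ℝ) ≤ bb ∧ kb ≤ (kap K l : ℝ) ∧ (kap K l.dropLast : ℝ) < kb}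

/-- `Pr_{R,Υ}(S^{b,k}) = Σ_{ā ∈ A^{b,k}} P_{R,Υ}(ā)` (the set `A^{b,k}` is finite,
so the `tsum` is the finite sum) -/
def PrS (B K : (j : Fin N) → Fin (r j) → ℕ) (R : List (X N r) → Fin N)
    (Υ : (j : Fin N) → Fin (r j) → ℝ) (bb kb : ℝ) : ℝ :=
  ∑' l : ASet B K bb kb, wordP R Υ l.1

/-- `k`-consistent rules mappings: whenever `κ(ā) < k`, every `i ∈ 𝒳_{R(ā)}`
satisfies `K_i ≤ k - κ(ā)`. -/
def Consistent (K : (j : Fin N) → Fin (r j) → ℕ) (k : ℕ)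
    (R : List (X N r) → Fin N) : Prop :=
  ∀ l : List (X N r), kap K l < k → ∀ i : Fin (r (R l)), K (R l) i + kap K l ≤ k

/-- Kullback-Leibler divergence -/
def KL {ρ : ℕ} (q g : Fin ρ → ℝ) : ℝ := ∑ i, q i * Real.log (q i / g i)

/-- the set of values of the `α`-branching optimization problem -/
def BrSet (α : ℝ) {ρ : ℕ} (bv kv : Fin ρ → ℕ) (g : Fin ρ → ℝ) : Set ℝ :=
  {x | ∃ q : Fin ρ → ℝ, (∀ i, 0 ≤ q i) ∧ (∑ i, q i = 1) ∧
        (∑ i, q i * (bv i : ℝ)) ≤ α * ∑ i, q i * (kv i : ℝ) ∧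
        x = KL q g / ∑ i, q i * (kv i : ℝ)}

end RB

namespace RB

/-! ### Tilting and the potential -/

/-- A vector with nonpositive drift dominates `ρ` times a probability vector under which the
increment `x` either vanishes or has strictly negative drift: if the drift is zero and `x` is not
a.s. zero, move a little mass to a letter with `x < 0`. -/
lemma exists_tilt {n : ℕ} (q x : Fin n → ℝ) (h0 : ∀ i, 0 ≤ q i) (h1 : ∑ i, q i = 1)
    (hx : ∑ i, q i * x i ≤ 0) {ρ : ℝ} (hρ0 : 0 < ρ) (hρ1 : ρ < 1) :
    ∃ p : Fin n → ℝ, (∀ i, 0 ≤ p i) ∧ (∑ i, p i = 1) ∧ (∀ i, ρ * p i ≤ q i) ∧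
      ((∀ i, p i = 0 ∨ x i = 0) ∨ ∑ i, p i * x i < 0) := by
  have hle : ∀ i, ρ * q i ≤ q i := fun i => by nlinarith [h0 i]
  rcases hx.lt_or_eq with hlt | heq
  · exact ⟨q, h0, h1, hle, Or.inr hlt⟩
  by_cases hz : ∀ i, q i * x i = 0
  · exact ⟨q, h0, h1, hle, Or.inl fun i => mul_eq_zero.1 (hz i)⟩
  push Not at hz
  obtain ⟨i₁, hi₁⟩ := hz
  obtain ⟨i₀, hi₀⟩ : ∃ i, q i * x i < 0 := by
    by_contra! hcon
    exact hi₁ ((Finset.sum_eq_zero_iff_of_nonneg fun i _ => hcon i).1 heq i₁ (Finset.mem_univ _))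
  have hq0 : 0 < q i₀ := (h0 i₀).lt_of_ne fun h => by simp [← h] at hi₀
  have hx0 : x i₀ < 0 := by by_contra! h; nlinarith [mul_nonneg hq0.le h]
  have hq1 : q i₀ ≤ 1 := h1 ▸ Finset.single_le_sum (fun i _ => h0 i) (Finset.mem_univ i₀)
  -- The mass moved: with `δ = q i₀ (1 - ρ)`, `ρ (q i₀ + δ) = q i₀ (1 - (1 - ρ)²) ≤ q i₀`.
  obtain ⟨δ, hδ⟩ : ∃ δ, δ = q i₀ * (1 - ρ) := ⟨_, rfl⟩
  have hδ0 : 0 < δ := hδ ▸ mul_pos hq0 (by linarith)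
  have hδ1 : δ ≤ 1 := by rw [hδ]; nlinarith
  refine ⟨fun i => (1 - δ) * q i + δ * (if i = i₀ then 1 else 0), ?_, ?_, ?_, Or.inr ?_⟩
  · intro i
    have := mul_nonneg (sub_nonneg.2 hδ1) (h0 i)
    dsimp only
    split_ifs <;> linarith
  · simp [Finset.sum_add_distrib, ← Finset.mul_sum, h1]
  · intro i
    have h2 := mul_nonneg hδ0.le (h0 i)
    have h3 := mul_nonneg hρ0.le h2
    dsimp only
    split_ifs with h
    · subst h
      have : ρ * (q i + δ) ≤ q i := by
        rw [hδ]; nlinarith [mul_nonneg hq0.le (sq_nonneg (1 - ρ))]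
      nlinarith
    · nlinarith [hle i]
  · have : ∑ i, ((1 - δ) * q i + δ * (if i = i₀ then 1 else 0)) * x i
        = (1 - δ) * (∑ i, q i * x i) + δ * x i₀ := by
      simp [add_mul, Finset.sum_add_distrib, Finset.mul_sum, mul_assoc]
    rw [this, heq]
    nlinarith

/-- Strictly negative drift makes `exp (θ S)` a supermartingale for all small `θ > 0`. -/
lemma eventually_exp_le {n : ℕ} (p x : Fin n → ℝ) (h1 : ∑ i, p i = 1)
    (hx : (∀ i, p i = 0 ∨ x i = 0) ∨ ∑ i, p i * x i < 0) :
    ∀ᶠ θ in nhdsWithin (0 : ℝ) (Set.Ioi 0), ∑ i, p i * Real.exp (θ * x i) ≤ 1 := by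
  rcases hx with hz | hneg
  · refine Filter.Eventually.of_forall fun θ => le_of_eq ?_
    rw [← h1]
    refine Finset.sum_congr rfl fun i _ => ?_
    rcases hz i with h | h <;> simp [h]
  · have hd : HasDerivAt (fun θ : ℝ => ∑ i, p i * Real.exp (θ * x i)) (∑ i, p i * x i) 0 := by
      have := HasDerivAt.fun_sum (u := Finset.univ) (x := (0 : ℝ))
        (A := fun (i : Fin n) (θ : ℝ) => p i * Real.exp (θ * x i)) (A' := fun i => p i * x i)
        (fun i _ => by
          simpa using (((hasDerivAt_id (0 : ℝ)).mul_const (x i)).exp).const_mul (p i))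
      exact this
    have hs := (hasDerivAt_iff_tendsto_slope.1 hd).eventually_lt_const hneg
    have hs' := hs.filter_mono (nhdsWithin_mono (0 : ℝ) (s := Set.Ioi 0) (t := {0}ᶜ)
      fun y hy => ne_of_gt hy)
    filter_upwards [hs', self_mem_nhdsWithin] with θ hθ hpos
    simp only [slope_def_field, zero_mul, Real.exp_zero, mul_one, h1, sub_zero] at hθ
    have hpos' : (0 : ℝ) < θ := hpos
    rw [div_lt_iff₀ hpos'] at hθ
    linarith

/-- The potential: a function of `s = μ - α κ` that bounds the winning probability from below,
up to a factor `ρ` per step. -/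
lemma exists_potential {N : ℕ} {r : Fin N → ℕ} (q x : (j : Fin N) → Fin (r j) → ℝ)
    (h0 : ∀ j i, 0 ≤ q j i) (h1 : ∀ j, ∑ i, q j i = 1)
    (hx : ∀ j, ∑ i, q j i * x j i ≤ 0) {ρ : ℝ} (hρ0 : 0 < ρ) (hρ1 : ρ < 1) :
    ∃ f : ℝ → ℝ, (∀ s, 0 ≤ f s) ∧ (∀ s, f s ≤ 1) ∧ (∀ s, 0 < s → f s = 0) ∧ 0 < f 0 ∧
      ∀ j s, ρ * f s ≤ ∑ i, q j i * f (s + x j i) := by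
  choose p hp0 hp1 hpq hpx using fun j => exists_tilt (q j) (x j) (h0 j) (h1 j) (hx j) hρ0 hρ1
  obtain ⟨θ, hθ, hθ0⟩ := ((Filter.eventually_all.2 fun j =>
    eventually_exp_le (p j) (x j) (hp1 j) (hpx j)).and self_mem_nhdsWithin).exists
  have hθ0 : (0 : ℝ) < θ := hθ0
  -- `c` is at most the expected value of the potential after one step from `0` that can move.
  have hc : ∀ j, ∀ᶠ c in nhdsWithin (0 : ℝ) (Set.Ioi 0), (∀ i, p j i = 0 ∨ x j i = 0) ∨
      c ≤ ∑ i, p j i * (if x j i < 0 then 1 - Real.exp (θ * x j i) else 0) := by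
    intro j
    rcases hpx j with h | h
    · exact Filter.Eventually.of_forall fun _ => Or.inl h
    have hnn : ∀ i, 0 ≤ p j i * (if x j i < 0 then 1 - Real.exp (θ * x j i) else 0) := by
      intro i
      refine mul_nonneg (hp0 j i) ?_
      split_ifs with hi
      · have : Real.exp (θ * x j i) < 1 := Real.exp_lt_one_iff.2 (mul_neg_of_pos_of_neg hθ0 hi)
        linarith
      · exact le_rfl
    obtain ⟨i, -, hi⟩ := Finset.exists_lt_of_sum_lt (g := fun _ => (0 : ℝ)) (by simpa using h)
    have hxi : x j i < 0 := by by_contra! h'; nlinarith [mul_nonneg (hp0 j i) h']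
    have hpi : 0 < p j i := (hp0 j i).lt_of_ne fun h => by simp [← h] at hi
    have hpos : 0 < ∑ i, p j i * (if x j i < 0 then 1 - Real.exp (θ * x j i) else 0) := by
      refine Finset.sum_pos' (fun i _ => hnn i) ⟨i, Finset.mem_univ _, ?_⟩
      rw [if_pos hxi]
      have : Real.exp (θ * x j i) < 1 := Real.exp_lt_one_iff.2 (mul_neg_of_pos_of_neg hθ0 hxi)
      exact mul_pos hpi (by linarith)
    filter_upwards [nhdsWithin_le_nhds (Iio_mem_nhds hpos)] with c hc
    exact Or.inr (le_of_lt hc)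
  obtain ⟨c, ⟨hc, hc0⟩, hc1⟩ := (((Filter.eventually_all.2 hc).and self_mem_nhdsWithin).and
    (nhdsWithin_le_nhds (Iio_mem_nhds (zero_lt_one (α := ℝ))))).exists
  have hc0 : (0 : ℝ) < c := hc0
  have hc1 : c < 1 := hc1
  set g : ℝ → ℝ := fun s => if s < 0 then 1 - Real.exp (θ * s) else 0 with hg
  set f : ℝ → ℝ := fun s => if s = 0 then c else g s with hf
  have hg0 : ∀ s, 0 ≤ g s := by
    intro s
    simp only [hg]
    split_ifs with h
    · have : Real.exp (θ * s) < 1 := Real.exp_lt_one_iff.2 (mul_neg_of_pos_of_neg hθ0 h)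
      linarith
    · exact le_rfl
  have hgf : ∀ s, g s ≤ f s := by
    intro s
    simp only [hf]
    split_ifs with h
    · subst h; simpa [hg] using hc0.le
    · exact le_rfl
  have hf0 : ∀ s, 0 ≤ f s := fun s => (hg0 s).trans (hgf s)
  have hexpf : ∀ s, 1 - Real.exp (θ * s) ≤ f s := by
    intro s
    refine le_trans ?_ (hgf s)
    simp only [hg]
    split_ifs with h
    · exact le_rfl
    · have : 1 ≤ Real.exp (θ * s) := Real.one_le_exp (mul_nonneg hθ0.le (not_lt.1 h))
      linarith
  have hfpos : ∀ s, 0 < s → f s = 0 := fun s hs => by simp [hf, hg, hs.ne', hs.le]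
  have hfz : f 0 = c := by simp [hf]
  have hsub : ∀ j s, f s ≤ ∑ i, p j i * f (s + x j i) := by
    intro j s
    rcases lt_trichotomy s 0 with hs | hs | hs
    · have e1 : f s = 1 - Real.exp (θ * s) := by simp [hf, hg, hs, hs.ne]
      have e2 : ∑ i, p j i * (1 - Real.exp (θ * (s + x j i)))
          = 1 - Real.exp (θ * s) * ∑ i, p j i * Real.exp (θ * x j i) := by
        conv_rhs => rw [Finset.mul_sum, ← hp1 j, ← Finset.sum_sub_distrib]
        refine Finset.sum_congr rfl fun i _ => ?_
        rw [mul_add θ, Real.exp_add]; ring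
      have e3 : ∑ i, p j i * (1 - Real.exp (θ * (s + x j i))) ≤ ∑ i, p j i * f (s + x j i) :=
        Finset.sum_le_sum fun i _ => mul_le_mul_of_nonneg_left (hexpf _) (hp0 j i)
      have e4 := mul_le_mul_of_nonneg_left (hθ j) (Real.exp_pos (θ * s)).le
      linarith
    · subst hs
      rw [hfz]
      rcases hc j with h | h
      · have : ∑ i, p j i * f (0 + x j i) = ∑ i, p j i * c := by
          refine Finset.sum_congr rfl fun i _ => ?_
          rcases h i with h | h <;> simp [h, hfz]
        rw [this, ← Finset.sum_mul, hp1 j, one_mul]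
      · refine h.trans (Finset.sum_le_sum fun i _ => mul_le_mul_of_nonneg_left ?_ (hp0 j i))
        rw [zero_add]
        exact hgf (x j i)
    · rw [hfpos s hs]
      exact Finset.sum_nonneg fun i _ => mul_nonneg (hp0 j i) (hf0 _)
  refine ⟨f, hf0, ?_, hfpos, hfz ▸ hc0, ?_⟩
  · intro s
    simp only [hf, hg]
    split_ifs
    · exact hc1.le
    · linarith [Real.exp_pos (θ * s)]
    · exact zero_le_one
  · intro j s
    calc ρ * f s ≤ ρ * ∑ i, p j i * f (s + x j i) := mul_le_mul_of_nonneg_left (hsub j s) hρ0.le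
      _ = ∑ i, (ρ * p j i) * f (s + x j i) := by rw [Finset.mul_sum]; simp only [mul_assoc]
      _ ≤ ∑ i, q j i * f (s + x j i) :=
        Finset.sum_le_sum fun i _ => mul_le_mul_of_nonneg_right (hpq j i) (hf0 _)

/-! ### Words and their probabilities -/

variable {N : ℕ} {r : Fin N → ℕ}

lemma kap_append (K : (j : Fin N) → Fin (r j) → ℕ) (l l' : List (X N r)) :
    kap K (l ++ l') = kap K l + kap K l' := by simp [kap]

lemma kap_snoc (K : (j : Fin N) → Fin (r j) → ℕ) (l : List (X N r)) (a : X N r) :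
    kap K (l ++ [a]) = kap K l + K a.1 a.2 := by simp [kap]

lemma mu_snoc (B : (j : Fin N) → Fin (r j) → ℕ) (l : List (X N r)) (a : X N r) :
    mu B (l ++ [a]) = mu B l + B a.1 a.2 := by simp [mu]

lemma length_le_mu (B : (j : Fin N) → Fin (r j) → ℕ) (hB : ∀ j i, 1 ≤ B j i)
    (l : List (X N r)) : l.length ≤ mu B l := by
  induction l with
  | nil => simp
  | cons a l ih =>
    have := hB a.1 a.2
    simp only [mu, List.map_cons, List.sum_cons, List.length_cons] at ih ⊢
    omega

lemma wordP_nil (R : List (X N r) → Fin N) (q : (j : Fin N) → Fin (r j) → ℝ) :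
    wordP R q [] = 1 := by simp [wordP]

lemma wordP_snoc (R : List (X N r) → Fin N) (q : (j : Fin N) → Fin (r j) → ℝ)
    (l : List (X N r)) (a : X N r) :
    wordP R q (l ++ [a]) = wordP R q l * (if a.1 = R l then q a.1 a.2 else 0) := by
  obtain ⟨F, hF⟩ : ∃ F : X N r → List (X N r) → ℝ,
      F = fun b u => if b.1 = R u then q b.1 b.2 else 0 := ⟨_, rfl⟩
  have hW : ∀ w, wordP R q w = ∏ i : Fin w.length, F (w.get i) (w.take i.1) := by
    intro w; rw [hF]; rfl
  have h : l.length + 1 = (l ++ [a]).length := by simp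
  have hlast : (if a.1 = R l then q a.1 a.2 else 0) = F a l := by rw [hF]
  rw [hlast, hW, hW, ← (finCongr h).prod_comp, Fin.prod_univ_castSucc]
  congr 1
  · refine Finset.prod_congr rfl fun i _ => ?_
    congr 1
    · simp
    · simp [List.take_append_of_le_length i.2.le]
  · congr 1 <;> simp

lemma wordP_nonneg (R : List (X N r) → Fin N) (q : (j : Fin N) → Fin (r j) → ℝ)
    (h0 : ∀ j i, 0 ≤ q j i) (l : List (X N r)) : 0 ≤ wordP R q l :=
  Finset.prod_nonneg fun i _ => by split_ifs; exacts [h0 _ _, le_rfl]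

/-- Summing over the next letter only sees the group chosen by `R`. -/
lemma sum_next (R : List (X N r) → Fin N) (q : (j : Fin N) → Fin (r j) → ℝ)
    (l : List (X N r)) (h : X N r → ℝ) :
    ∑ a, wordP R q (l ++ [a]) * h a = wordP R q l * ∑ i, q (R l) i * h ⟨R l, i⟩ := by
  simp only [wordP_snoc, Fintype.sum_sigma]
  rw [Finset.sum_eq_single (R l)]
  · simp [Finset.mul_sum, mul_assoc]
  · intro j _ hj; simp [hj]
  · simp

/-- The probability of the words of a finite set `A` that extend `l`. -/
def tailSum (A : Finset (List (X N r))) (R : List (X N r) → Fin N)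
    (q : (j : Fin N) → Fin (r j) → ℝ) (l : List (X N r)) : ℝ :=
  ∑ w ∈ A, if l <+: w then wordP R q w else 0

lemma tailSum_nonneg (A : Finset (List (X N r))) (R : List (X N r) → Fin N)
    (q : (j : Fin N) → Fin (r j) → ℝ) (h0 : ∀ j i, 0 ≤ q j i) (l : List (X N r)) :
    0 ≤ tailSum A R q l :=
  Finset.sum_nonneg fun w _ => by split_ifs; exacts [wordP_nonneg R q h0 w, le_rfl]

lemma tailSum_step (A : Finset (List (X N r))) (R : List (X N r) → Fin N)
    (q : (j : Fin N) → Fin (r j) → ℝ) (l : List (X N r)) (hl : l ∉ A) :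
    tailSum A R q l = ∑ a, tailSum A R q (l ++ [a]) := by
  unfold tailSum
  rw [Finset.sum_comm]
  refine Finset.sum_congr rfl fun w hw => ?_
  by_cases h : l <+: w
  · obtain ⟨u, rfl⟩ := h
    cases u with
    | nil => simp at hw; exact absurd hw hl
    | cons b u => simp [List.cons_prefix_cons, List.prefix_append_right_inj]
  · rw [if_neg h]
    refine (Finset.sum_eq_zero fun a _ => if_neg fun h' => h ?_).symm
    exact (List.prefix_append l [a]).trans h'

lemma ASet_eq (B K : (j : Fin N) → Fin (r j) → ℕ) {β : ℝ} {k : ℕ} (hβ : 0 ≤ β) (hk : 0 < k) :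
    ASet B K β (k : ℝ) =
      {l | l ≠ [] ∧ (mu B l : ℝ) ≤ β ∧ k ≤ kap K l ∧ kap K l.dropLast < k} := by
  have : ¬ ((k : ℝ) ≤ 0) := by exact_mod_cast hk.not_ge
  rw [ASet, if_neg hβ.not_gt, if_neg this]
  simp only [Nat.cast_le, Nat.cast_lt]

lemma ASet_finite (B K : (j : Fin N) → Fin (r j) → ℕ) (hB : ∀ j i, 1 ≤ B j i) {β : ℝ} {k : ℕ}
    (hβ : 0 ≤ β) (hk : 0 < k) : (ASet B K β (k : ℝ)).Finite := by
  refine (List.finite_length_le (X N r) ⌊β⌋₊).subset fun l hl => ?_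
  rw [ASet_eq B K hβ hk] at hl
  exact (length_le_mu B hB l).trans (Nat.le_floor hl.2.1)

/-- Kraft's inequality: `A^{β,k}` is prefix-free, so its words extending `l` have total
probability at most that of `l`. The induction is on a bound `m` for the remaining length. -/
lemma tailSum_le (B K : (j : Fin N) → Fin (r j) → ℕ) (hB : ∀ j i, 1 ≤ B j i) {β : ℝ} {k : ℕ}
    (hβ : 0 ≤ β) (hk : 0 < k) (A : Finset (List (X N r))) (hA : ↑A = ASet B K β (k : ℝ))
    (R : List (X N r) → Fin N) (q : (j : Fin N) → Fin (r j) → ℝ) (h0 : ∀ j i, 0 ≤ q j i)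
    (h1 : ∀ j, ∑ i, q j i = 1) (m : ℕ) (l : List (X N r)) (hm : ⌊β⌋₊ + 1 ≤ l.length + m) :
    tailSum A R q l ≤ wordP R q l := by
  have hmem : ∀ w, w ∈ A ↔ w ≠ [] ∧ (mu B w : ℝ) ≤ β ∧ k ≤ kap K w ∧ kap K w.dropLast < k := by
    intro w
    rw [← Finset.mem_coe, hA, ASet_eq B K hβ hk]; rfl
  induction m generalizing l with
  | zero =>
    refine le_trans (le_of_eq ?_) (wordP_nonneg R q h0 l)
    refine Finset.sum_eq_zero fun w hw => if_neg fun h => ?_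
    have h2 : w.length ≤ ⌊β⌋₊ :=
      (length_le_mu B hB w).trans (Nat.le_floor ((hmem w).1 hw).2.1)
    have := h.length_le
    omega
  | succ m ih =>
    by_cases hl : l ∈ A
    · refine le_of_eq ?_
      unfold tailSum
      rw [Finset.sum_eq_single_of_mem l hl, if_pos List.prefix_rfl]
      intro w hw hne
      refine if_neg ?_
      rintro ⟨u, rfl⟩
      have hu : u ≠ [] := by rintro rfl; simp at hne
      have h2 := ((hmem _).1 hw).2.2.2
      have h3 := ((hmem _).1 hl).2.2.1
      rw [List.dropLast_append_of_ne_nil hu, kap_append] at h2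
      omega
    · rw [tailSum_step A R q l hl]
      calc ∑ a, tailSum A R q (l ++ [a]) ≤ ∑ a, wordP R q (l ++ [a]) * 1 :=
            Finset.sum_le_sum fun a _ => by
              rw [mul_one]
              exact ih _ (by simp only [List.length_append, List.length_singleton]; omega)
        _ = wordP R q l := by rw [sum_next R q l fun _ => 1]; simp [h1]

/-- Backward induction with the potential. `m` bounds the remaining cost, hence the number of
remaining steps; `hinv` says that `l` is a reachable state, running or just stopped. -/
lemma lower_bound (B K : (j : Fin N) → Fin (r j) → ℕ) (hB : ∀ j i, 1 ≤ B j i) {α : ℝ}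
    (hα : 0 < α) {k : ℕ} (hk : 0 < k) (A : Finset (List (X N r)))
    (hA : ↑A = ASet B K (α * k) (k : ℝ)) (R : List (X N r) → Fin N) (hR : Consistent K k R)
    (q : (j : Fin N) → Fin (r j) → ℝ) (h0 : ∀ j i, 0 ≤ q j i) {ρ : ℝ} (hρ0 : 0 < ρ) (hρ1 : ρ < 1)
    (f : ℝ → ℝ) (hf1 : ∀ s, f s ≤ 1) (hfpos : ∀ s, 0 < s → f s = 0)
    (hf : ∀ j s, ρ * f s ≤ ∑ i, q j i * f (s + ((B j i : ℝ) - α * K j i)))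
    (m : ℕ) (l : List (X N r)) (hm : ⌊α * k⌋₊ + 1 ≤ mu B l + m)
    (hinv : kap K l < k ∨ (kap K l = k ∧ l ≠ [] ∧ kap K l.dropLast < k)) :
    wordP R q l * (ρ ^ m * f ((mu B l : ℝ) - α * kap K l)) ≤ tailSum A R q l := by
  have hβ : 0 ≤ α * k := by positivity
  have hmem : ∀ w, w ∈ A ↔
      w ≠ [] ∧ (mu B w : ℝ) ≤ α * k ∧ k ≤ kap K w ∧ kap K w.dropLast < k := by
    intro w
    rw [← Finset.mem_coe, hA, ASet_eq B K hβ hk]; rfl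
  -- Once the cost exceeds `α k`, the state is losing: `κ ≤ k` makes `μ - α κ` positive.
  have hlose : α * k < mu B l →
      wordP R q l * (ρ ^ m * f ((mu B l : ℝ) - α * kap K l)) ≤ tailSum A R q l := by
    intro h
    have hκ : kap K l ≤ k := by rcases hinv with h | h <;> omega
    have hκ' : (kap K l : ℝ) ≤ k := by exact_mod_cast hκ
    rw [hfpos _ (by nlinarith), mul_zero, mul_zero]
    exact tailSum_nonneg A R q h0 l
  induction m generalizing l with
  | zero => exact hlose (Nat.lt_of_floor_lt (by omega))
  | succ m ih =>
    rcases lt_or_ge (α * k) (mu B l : ℝ) with h | h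
    · exact hlose h
    rcases hinv with hlt | ⟨heq, hne, hd⟩
    · have hl : l ∉ A := fun hl => by have := ((hmem l).1 hl).2.2.1; omega
      rw [tailSum_step A R q l hl]
      have hstep : ∀ a : X N r, wordP R q (l ++ [a]) *
          (ρ ^ m * f ((mu B l : ℝ) - α * kap K l + ((B a.1 a.2 : ℝ) - α * K a.1 a.2)))
            ≤ tailSum A R q (l ++ [a]) := by
        intro a
        by_cases ha : a.1 = R l
        · have hcov : K a.1 a.2 + kap K l ≤ k := by
            obtain ⟨j, i⟩ := a
            obtain rfl : j = R l := ha
            exact hR l hlt i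
          have hinv' : kap K (l ++ [a]) < k ∨ (kap K (l ++ [a]) = k ∧ l ++ [a] ≠ [] ∧
              kap K (l ++ [a]).dropLast < k) := by
            rw [kap_snoc]
            rcases hcov.lt_or_eq with h | h
            · left; omega
            · right; exact ⟨by omega, by simp, by simpa using hlt⟩
          have hm' : ⌊α * k⌋₊ + 1 ≤ mu B (l ++ [a]) + m := by
            have := hB a.1 a.2
            rw [mu_snoc]; omega
          have := ih (l ++ [a]) hm' hinv' (fun h' => by
            have hκ : kap K (l ++ [a]) ≤ k := by rw [kap_snoc]; omega
            have hκ' : (kap K (l ++ [a]) : ℝ) ≤ k := by exact_mod_cast hκ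
            rw [hfpos _ (by nlinarith), mul_zero, mul_zero]
            exact tailSum_nonneg A R q h0 _)
          rw [kap_snoc, mu_snoc] at this
          convert this using 4
          push_cast; ring
        · rw [wordP_snoc, if_neg ha, mul_zero, zero_mul]
          exact tailSum_nonneg A R q h0 _
      refine le_trans ?_ (Finset.sum_le_sum fun a _ => hstep a)
      rw [sum_next R q l fun a =>
        ρ ^ m * f ((mu B l : ℝ) - α * kap K l + ((B a.1 a.2 : ℝ) - α * K a.1 a.2))]
      refine mul_le_mul_of_nonneg_left ?_ (wordP_nonneg R q h0 l)
      calc ρ ^ (m + 1) * f ((mu B l : ℝ) - α * kap K l)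
          = ρ ^ m * (ρ * f ((mu B l : ℝ) - α * kap K l)) := by ring
        _ ≤ ρ ^ m * ∑ i, q (R l) i *
              f ((mu B l : ℝ) - α * kap K l + ((B (R l) i : ℝ) - α * K (R l) i)) :=
            mul_le_mul_of_nonneg_left (hf _ _) (by positivity)
        _ = _ := by
            rw [Finset.mul_sum]
            exact Finset.sum_congr rfl fun i _ => by ring
    · have hl : l ∈ A := (hmem l).2 ⟨hne, h, heq.ge, hd⟩
      have h2 : wordP R q l ≤ tailSum A R q l := by
        have := Finset.single_le_sum (s := A) (f := fun w => if l <+: w then wordP R q w else 0)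
          (fun w _ => by
            show 0 ≤ if l <+: w then wordP R q w else 0
            split_ifs; exacts [wordP_nonneg R q h0 w, le_rfl]) hl
        simpa [tailSum] using this
      refine le_trans (mul_le_of_le_one_right (wordP_nonneg R q h0 l) ?_) h2
      calc ρ ^ (m + 1) * f _ ≤ ρ ^ (m + 1) * 1 :=
            mul_le_mul_of_nonneg_left (hf1 _) (by positivity)
        _ ≤ 1 := by rw [mul_one]; exact pow_le_one₀ hρ0.le hρ1.le

lemma PrS_eq_tailSum (B K : (j : Fin N) → Fin (r j) → ℕ) (β κ : ℝ) (A : Finset (List (X N r)))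
    (hA : ↑A = ASet B K β κ) (R : List (X N r) → Fin N) (q : (j : Fin N) → Fin (r j) → ℝ) :
    PrS B K R q β κ = tailSum A R q [] := by
  unfold PrS tailSum
  rw [← hA]
  simp only [show ∀ w : List (X N r), [] <+: w from fun w => ⟨w, rfl⟩, if_true]
  exact Finset.tsum_subtype A (wordP R q)

end RB

/-! ### The limit -/

/-- Lemma 17, `strong_limit`.  `q j` is the minimizer
attaining the `α`-branching number `M_j` (finite by `hfeas`), and `Q` is their
concatenation.  Then `lim_{k→∞} inf_{R∈𝓡(k)} (1/k) log Pr_{R,Q}(S^{αk,k}) = 0`. -/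
theorem stmt_18
    (N : ℕ) (hN : 1 ≤ N) (r : Fin N → ℕ) (hr : ∀ j, 1 ≤ r j)
    (bb kb : (j : Fin N) → Fin (r j) → ℕ)
    (hbb : ∀ j i, 1 ≤ bb j i)
    (γ : (j : Fin N) → Fin (r j) → ℝ)
    (hγpos : ∀ j i, 0 < γ j i) (hγsum : ∀ j, ∑ i, γ j i = 1)
    (hks : ∃ j, ∀ i, kb j i ≤ 1)
    (α : ℝ) (hα : 0 < α)
    (hfeas : ∀ j, (RB.BrSet α (bb j) (kb j) (γ j)).Nonempty)
    (q : (j : Fin N) → Fin (r j) → ℝ)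
    (hq : ∀ j, (∀ i, 0 ≤ q j i) ∧ (∑ i, q j i = 1) ∧
      (∑ i, q j i * (bb j i : ℝ)) ≤ α * (∑ i, q j i * (kb j i : ℝ)) ∧
      RB.KL (q j) (γ j) / (∑ i, q j i * (kb j i : ℝ)) =
        sInf (RB.BrSet α (bb j) (kb j) (γ j))) :
    Filter.Tendsto (fun k : ℕ =>
        sInf {x | ∃ R : List (RB.X N r) → Fin N, RB.Consistent kb k R ∧
          x = Real.log (RB.PrS bb kb R q (α * (k : ℝ)) (k : ℝ)) / (k : ℝ)})
      Filter.atTop (nhds 0) := by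
  have h0 : ∀ j i, 0 ≤ q j i := fun j => (hq j).1
  have h1 : ∀ j, ∑ i, q j i = 1 := fun j => (hq j).2.1
  have hx : ∀ j, ∑ i, q j i * ((bb j i : ℝ) - α * kb j i) ≤ 0 := by
    intro j
    have h := (hq j).2.2.1
    rw [Finset.mul_sum, ← sub_nonpos, ← Finset.sum_sub_distrib] at h
    refine le_trans (le_of_eq (Finset.sum_congr rfl fun i _ => ?_)) h
    ring
  rw [Metric.tendsto_atTop']
  intro ε hε
  -- With this `ρ`, the exponential rate `α log ρ` of the lower bound is `-ε / 2`.
  obtain ⟨ρ, hρ⟩ : ∃ ρ, ρ = Real.exp (-(ε / (2 * α))) := ⟨_, rfl⟩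
  have hρ0 : 0 < ρ := hρ ▸ Real.exp_pos _
  have hρ1 : ρ < 1 := by
    rw [hρ, Real.exp_lt_one_iff, neg_lt_zero]; positivity
  have hlogρ : Real.log ρ = -(ε / (2 * α)) := by rw [hρ, Real.log_exp]
  obtain ⟨f, -, hf1, hfpos, hfz, hf⟩ := RB.exists_potential q
    (fun j i => (bb j i : ℝ) - α * kb j i) h0 h1 hx hρ0 hρ1
  -- The lower bound on `(1/k) log Pr` is `-ε/2 - C/k`.
  obtain ⟨C, hC⟩ : ∃ C, C = ε / (2 * α) - Real.log (f 0) := ⟨_, rfl⟩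
  obtain ⟨k₀, hk₀⟩ := exists_nat_gt (C / (ε / 4))
  refine ⟨k₀, fun k hkk => ?_⟩
  have hk : 0 < k := by omega
  have hkR : (0 : ℝ) < k := by exact_mod_cast hk
  have hβ : 0 ≤ α * k := by positivity
  have hCk : C < ε / 4 * k := by
    have : (k₀ : ℝ) ≤ k := by exact_mod_cast hkk.le
    rw [div_lt_iff₀ (by positivity)] at hk₀
    nlinarith
  have hfin := RB.ASet_finite bb kb hbb hβ hk
  have hA : ↑hfin.toFinset = RB.ASet bb kb (α * k) (k : ℝ) := hfin.coe_toFinset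
  have hbounds : ∀ y ∈ {x | ∃ R : List (RB.X N r) → Fin N, RB.Consistent kb k R ∧
      x = Real.log (RB.PrS bb kb R q (α * (k : ℝ)) (k : ℝ)) / (k : ℝ)},
      -(3 * ε / 4) ≤ y ∧ y ≤ 0 := by
    rintro y ⟨R, hR, rfl⟩
    rw [RB.PrS_eq_tailSum bb kb _ _ _ hA]
    have hup := RB.tailSum_le bb kb hbb hβ hk _ hA R q h0 h1 (⌊α * k⌋₊ + 1) [] (by simp)
    have hlow := RB.lower_bound bb kb hbb hα hk _ hA R hR q h0 hρ0 hρ1 f hf1 hfpos hf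
      (⌊α * k⌋₊ + 1) [] (by simp) (Or.inl (by simpa [RB.kap] using hk))
    rw [RB.wordP_nil] at hup hlow
    simp only [RB.mu, RB.kap, List.map_nil, List.sum_nil, Nat.cast_zero, mul_zero, sub_zero,
      one_mul] at hlow
    refine ⟨?_, div_nonpos_of_nonpos_of_nonneg
      (Real.log_nonpos (RB.tailSum_nonneg _ R q h0 []) hup) hkR.le⟩
    have hlog := Real.log_le_log (by positivity) hlow
    rw [Real.log_mul (by positivity) hfz.ne', Real.log_pow, hlogρ] at hlog
    rw [le_div_iff₀ hkR]
    have hfl : ((⌊α * k⌋₊ : ℕ) : ℝ) ≤ α * k := Nat.floor_le hβ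
    have hrate : 0 < ε / (2 * α) := by positivity
    have hid : ε / (2 * α) * (α * k) = ε / 2 * k := by field_simp
    push_cast at hlog
    nlinarith
  rw [Real.dist_eq, sub_zero, abs_lt]
  constructor
  · have := Real.le_sInf (fun y hy => (hbounds y hy).1) (by linarith)
    linarith
  · exact (Real.sInf_nonpos fun y hy => (hbounds y hy).2).trans_lt hε
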